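/- arXiv:1511.05878 — 2 statements merged into one kernel-verified Lean document; each statement's English description precedes it below -/
import Mathlib

section
/- Let (X, ρ) be a complete separable metric space and let p ≥ 1. Assume that for every Borel probability measure μ on the countable product ℕ → X there exists a Borel-measurable map ζ : Ω → (ℕ → X) whose law is μ. Define the Lᵖ metric on R(X) by d_p(ξ, η) = (∫ ρ(ξ(ω), η(ω))ᵖ dℙ(ω))^{1/p} ∈ [0, ∞]. Then for ξ ∈ R(X) and a sequence (ξₙ)ₙ in R(X), lim_{n→∞} d̂_p(ξ, ξₙ) = 0 if and only if there exist ξ′ ∈ R(X) and a sequence (ξₙ′)ₙ in R(X) such that L(ξ′) = L(ξ), L(ξₙ′) = L(ξₙ) for all n, and lim_{n→∞} d_p(ξ′, ξₙ′) = 0. -/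
open MeasureTheory Filter
open scoped ENNReal Topology

/-- The minimal functional associated with `e`:
`ê(ξ, η) = inf { e(ξ′, η′) | ξ′, η′ measurable, L(ξ′) = L(ξ), L(η′) = L(η) }`. -/
noncomputable def minPM {Ω X : Type*} [MeasurableSpace Ω] [MeasurableSpace X]
    (P : Measure Ω) (e : (Ω → X) → (Ω → X) → ℝ≥0∞) (ξ η : Ω → X) : ℝ≥0∞ :=
  ⨅ (ξ' : Ω → X) (η' : Ω → X) (_ : Measurable ξ') (_ : Measurable η')
    (_ : Measure.map ξ' P = Measure.map ξ P) (_ : Measure.map η' P = Measure.map η P),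
    e ξ' η'

/-- The `Lᵖ` metric on random variables:
`d_p(ξ, η) = (∫ ρ(ξ(ω), η(ω))ᵖ dℙ(ω))^(1/p) ∈ [0, ∞]`. -/
noncomputable def dLp {Ω X : Type*} [MeasurableSpace Ω] [MetricSpace X]
    (P : Measure Ω) (p : ℝ) (ξ η : Ω → X) : ℝ≥0∞ :=
  (∫⁻ ω, ENNReal.ofReal (dist (ξ ω) (η ω)) ^ p ∂P) ^ (1 / p)

open ProbabilityTheory unitInterval

/-!
For each `n` choose a coupling of `ξ` and `ξₙ` whose cost is within `1 / n` of the minimal one. All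
these couplings have first marginal `L(ξ)`, so they can be glued: start from one point drawn from
`L(ξ)` and draw the other coordinates from the conditional laws, independently given that point.
The glued law lives on a countable product, so it is the law of random variables on `Ω`, and the
cost of each pair is unchanged because it depends only on the joint law of that pair.
-/

section Gluing

variable {α : Type*} [MeasurableSpace α]

theorem exists_measurable_map_prod_volume_eq {β : Type*} [MeasurableSpace β]
    [StandardBorelSpace β] [Nonempty β] (ρ : Measure (α × β)) [IsFiniteMeasure ρ] :
    ∃ f : α → I → β, Measurable (Function.uncurry f) ∧
      (ρ.fst.prod volume).map (fun q ↦ (q.1, f q.1 q.2)) = ρ := by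
  obtain ⟨f, hf, hf_law⟩ := Kernel.exists_measurable_map_eq_unitInterval ρ.condKernel
  refine ⟨f, hf, ?_⟩
  have hgraph : Measurable fun q : α × I ↦ (q.1, f q.1 q.2) := measurable_fst.prodMk hf
  refine Eq.trans ?_ (ρ.disintegrate ρ.condKernel)
  ext s hs
  rw [Measure.map_apply hgraph hs, Measure.prod_apply (hgraph hs), Measure.compProd_apply hs]
  refine lintegral_congr fun x ↦ ?_
  rw [← hf_law x, Measure.map_apply hf.of_uncurry_left (measurable_prodMk_left hs)]
  rfl

theorem exists_measure_prod_pi_map_eq {ι : Type*} {β : ι → Type*} [∀ i, MeasurableSpace (β i)]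
    [∀ i, StandardBorelSpace (β i)] [∀ i, Nonempty (β i)] (m : Measure α) [SFinite m]
    (ρ : ∀ i, Measure (α × β i)) [∀ i, IsFiniteMeasure (ρ i)] (hρ : ∀ i, (ρ i).fst = m) :
    ∃ μ : Measure (α × ∀ i, β i), μ.fst = m ∧ ∀ i, μ.map (fun q ↦ (q.1, q.2 i)) = ρ i := by
  choose f hf hf_law using fun i ↦ exists_measurable_map_prod_volume_eq (ρ i)
  let noise : Measure (ι → I) := Measure.infinitePi fun _ ↦ volume
  let glue : α × (ι → I) → α × ∀ i, β i := fun q ↦ (q.1, fun i ↦ f i q.1 (q.2 i))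
  have hglue : Measurable glue := measurable_fst.prodMk <| measurable_pi_lambda _ fun i ↦
    (hf i).comp (measurable_fst.prodMk ((measurable_pi_apply i).comp measurable_snd))
  refine ⟨(m.prod noise).map glue, ?_, fun i ↦ ?_⟩
  · rw [Measure.fst, Measure.map_map measurable_fst hglue]
    exact Measure.fst_prod
  · have hgraph : Measurable fun q : α × I ↦ (q.1, f i q.1 q.2) := measurable_fst.prodMk (hf i)
    have hnoise : (m.prod noise).map (Prod.map id (Function.eval i)) = m.prod volume := by
      rw [← Measure.map_prod_map _ _ measurable_id (measurable_pi_apply i), Measure.map_id,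
        Measure.infinitePi_map_eval]
    calc ((m.prod noise).map glue).map (fun q ↦ (q.1, q.2 i))
        = ((m.prod noise).map (Prod.map id (Function.eval i))).map
            (fun q ↦ (q.1, f i q.1 q.2)) := by
          rw [Measure.map_map (by fun_prop) hglue, Measure.map_map hgraph (by fun_prop)]
          rfl
      _ = ρ i := by rw [hnoise, ← hρ i, hf_law i]

end Gluing

section Realization

variable {Ω X : Type*} [MeasurableSpace Ω] [MeasurableSpace X] {P : Measure Ω}

theorem exists_measurable_map_eq_prod_sequence
    (hrich : ∀ μ : Measure (ℕ → X), IsProbabilityMeasure μ →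
      ∃ ζ : Ω → ℕ → X, Measurable ζ ∧ Measure.map ζ P = μ)
    (μ : Measure (X × (ℕ → X))) [IsProbabilityMeasure μ] :
    ∃ ζ : Ω → X × (ℕ → X), Measurable ζ ∧ P.map ζ = μ := by
  let cons : X × (ℕ → X) → ℕ → X := fun q n ↦ Nat.casesOn n q.1 q.2
  let uncons : (ℕ → X) → X × (ℕ → X) := fun x ↦ (x 0, fun n ↦ x (n + 1))
  have hcons : Measurable cons := by
    refine measurable_pi_lambda _ fun n ↦ ?_
    cases n with
    | zero => exact measurable_fst
    | succ n => exact (measurable_pi_apply n).comp measurable_snd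
  have huncons : Measurable uncons := by fun_prop
  obtain ⟨ζ, hζ, hζ_law⟩ :=
    hrich (μ.map cons) (Measure.isProbabilityMeasure_map hcons.aemeasurable)
  refine ⟨uncons ∘ ζ, huncons.comp hζ, ?_⟩
  rw [← Measure.map_map huncons hζ, hζ_law, Measure.map_map huncons hcons]
  exact Measure.map_id

theorem exists_measurable_pairs_map_eq [StandardBorelSpace X] [IsProbabilityMeasure P]
    (hrich : ∀ μ : Measure (ℕ → X), IsProbabilityMeasure μ →
      ∃ ζ : Ω → ℕ → X, Measurable ζ ∧ Measure.map ζ P = μ)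
    {m : Measure X} {a b : ℕ → Ω → X} (ha : ∀ n, Measurable (a n)) (hb : ∀ n, Measurable (b n))
    (ham : ∀ n, P.map (a n) = m) :
    ∃ (ξ' : Ω → X) (ξs' : ℕ → Ω → X), Measurable ξ' ∧ (∀ n, Measurable (ξs' n)) ∧
      ∀ n, P.map (fun ω ↦ (ξ' ω, ξs' n ω)) = P.map (fun ω ↦ (a n ω, b n ω)) := by
  have : Nonempty X := (nonempty_of_isProbabilityMeasure P).map (a 0)
  have : IsProbabilityMeasure m := ham 0 ▸ Measure.isProbabilityMeasure_map (ha 0).aemeasurable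
  obtain ⟨μ, hμ_fst, hμ⟩ := exists_measure_prod_pi_map_eq m
    (fun n ↦ P.map fun ω ↦ (a n ω, b n ω))
    (fun n ↦ (Measure.fst_map_prodMk (hb n)).trans (ham n))
  have : IsProbabilityMeasure (μ.map Prod.fst) := by rwa [← Measure.fst, hμ_fst]
  have : IsProbabilityMeasure μ := Measure.isProbabilityMeasure_of_map Prod.fst
  obtain ⟨ζ, hζ, hζ_law⟩ := exists_measurable_map_eq_prod_sequence hrich μ
  refine ⟨fun ω ↦ (ζ ω).1, fun n ω ↦ (ζ ω).2 n, by fun_prop, fun n ↦ by fun_prop, fun n ↦ ?_⟩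
  rw [← hμ n, ← hζ_law, Measure.map_map (by fun_prop) hζ]
  rfl

end Realization

section MinimalFunctional

variable {Ω X : Type*} [MeasurableSpace Ω] [MeasurableSpace X] {P : Measure Ω}
  {e : (Ω → X) → (Ω → X) → ℝ≥0∞}

/-- The value of `e` at a pair of random variables is a function of their joint law under `P`. This
is the property of a probability metric that allows a coupling to be replaced by any other pair
with the same joint law. Only measurable arguments are constrained. -/
def DependsOnJointLaw (P : Measure Ω) (e : (Ω → X) → (Ω → X) → ℝ≥0∞) : Prop :=
  ∀ ⦃a b a' b' : Ω → X⦄, Measurable a → Measurable b → Measurable a' → Measurable b' →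
    P.map (fun ω ↦ (a ω, b ω)) = P.map (fun ω ↦ (a' ω, b' ω)) → e a b = e a' b'

theorem minPM_le {ξ η ξ' η' : Ω → X} (hξ' : Measurable ξ') (hη' : Measurable η')
    (hξ_law : P.map ξ' = P.map ξ) (hη_law : P.map η' = P.map η) : minPM P e ξ η ≤ e ξ' η' :=
  iInf₂_le_of_le ξ' η' <| iInf₂_le_of_le hξ' hη' <| iInf₂_le hξ_law hη_law

theorem exists_le_minPM_add {ξ η : Ω → X} (hξ : Measurable ξ) (hη : Measurable η) {ε : ℝ≥0∞}
    (hε : ε ≠ 0) :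
    ∃ ξ' η' : Ω → X, Measurable ξ' ∧ Measurable η' ∧ P.map ξ' = P.map ξ ∧ P.map η' = P.map η ∧
      e ξ' η' ≤ minPM P e ξ η + ε := by
  by_cases htop : minPM P e ξ η = ∞
  · exact ⟨ξ, η, hξ, hη, rfl, rfl, by simp [htop]⟩
  have hlt : minPM P e ξ η < minPM P e ξ η + ε := ENNReal.lt_add_right htop hε
  conv_lhs at hlt => unfold minPM
  simp only [iInf_lt_iff] at hlt
  obtain ⟨ξ', η', hξ', hη', hξ_law, hη_law, hle⟩ := hlt
  exact ⟨ξ', η', hξ', hη', hξ_law, hη_law, hle.le⟩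

theorem exists_forall_le_minPM_add [StandardBorelSpace X] [IsProbabilityMeasure P]
    (hrich : ∀ μ : Measure (ℕ → X), IsProbabilityMeasure μ →
      ∃ ζ : Ω → ℕ → X, Measurable ζ ∧ Measure.map ζ P = μ)
    (he : DependsOnJointLaw P e) {ξ : Ω → X} (hξ : Measurable ξ) {ξs : ℕ → Ω → X}
    (hξs : ∀ n, Measurable (ξs n)) {ε : ℕ → ℝ≥0∞} (hε : ∀ n, ε n ≠ 0) :
    ∃ (ξ' : Ω → X) (ξs' : ℕ → Ω → X), Measurable ξ' ∧ (∀ n, Measurable (ξs' n)) ∧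
      P.map ξ' = P.map ξ ∧ (∀ n, P.map (ξs' n) = P.map (ξs n)) ∧
      ∀ n, e ξ' (ξs' n) ≤ minPM P e ξ (ξs n) + ε n := by
  choose a b ha hb ha_law hb_law hab using fun n ↦
    exists_le_minPM_add (P := P) (e := e) hξ (hξs n) (hε n)
  obtain ⟨ξ', ξs', hξ', hξs', hjoint⟩ := exists_measurable_pairs_map_eq hrich ha hb ha_law
  refine ⟨ξ', ξs', hξ', hξs', ?_, fun n ↦ ?_, fun n ↦ ?_⟩
  · simpa only [Measure.fst_map_prodMk (hξs' 0), Measure.fst_map_prodMk (hb 0), ha_law 0]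
      using congrArg Measure.fst (hjoint 0)
  · simpa only [Measure.snd_map_prodMk hξ', Measure.snd_map_prodMk (ha n), hb_law n]
      using congrArg Measure.snd (hjoint n)
  · exact (he hξ' (hξs' n) (ha n) (hb n) (hjoint n)).trans_le (hab n)

end MinimalFunctional

theorem dependsOnJointLaw_dLp {Ω X : Type*} [MeasurableSpace Ω] [MetricSpace X]
    [SecondCountableTopology X] [MeasurableSpace X] [OpensMeasurableSpace X]
    (P : Measure Ω) (p : ℝ) : DependsOnJointLaw P (dLp (X := X) P p) := by
  intro a b a' b' ha hb ha' hb' hlaw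
  have hcost : Measurable fun q : X × X ↦ ENNReal.ofReal (dist q.1 q.2) ^ p := by fun_prop
  unfold dLp
  rw [← lintegral_map hcost (ha.prodMk hb), ← lintegral_map hcost (ha'.prodMk hb'), hlaw]

theorem tendsto_minPM_dLp_zero_iff_general
    {Ω X : Type*} [MeasurableSpace Ω] [MeasurableSpace X] [StandardBorelSpace X]
    (P : Measure Ω) [IsProbabilityMeasure P]
    (hrich : ∀ μ : Measure (ℕ → X), IsProbabilityMeasure μ →
      ∃ ζ : Ω → ℕ → X, Measurable ζ ∧ Measure.map ζ P = μ)
    {e : (Ω → X) → (Ω → X) → ℝ≥0∞} (he : DependsOnJointLaw P e)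
    (ξ : Ω → X) (hξ : Measurable ξ)
    (ξs : ℕ → Ω → X) (hξs : ∀ n, Measurable (ξs n)) :
    Tendsto (fun n => minPM P e ξ (ξs n)) atTop (𝓝 0) ↔
    ∃ (ξ' : Ω → X) (ξs' : ℕ → Ω → X), Measurable ξ' ∧ (∀ n, Measurable (ξs' n)) ∧
      Measure.map ξ' P = Measure.map ξ P ∧
      (∀ n, Measure.map (ξs' n) P = Measure.map (ξs n) P) ∧
      Tendsto (fun n => e ξ' (ξs' n)) atTop (𝓝 0) := by
  constructor
  · intro hlim
    obtain ⟨ξ', ξs', hξ', hξs', hξ_law, hξs_law, hle⟩ := exists_forall_le_minPM_add hrich he hξ hξs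
      (ε := fun n ↦ (n : ℝ≥0∞)⁻¹) fun n ↦ ENNReal.inv_ne_zero.2 (ENNReal.natCast_ne_top n)
    have hbound : Tendsto (fun n : ℕ ↦ minPM P e ξ (ξs n) + (n : ℝ≥0∞)⁻¹) atTop (𝓝 0) := by
      simpa only [add_zero] using hlim.add ENNReal.tendsto_inv_nat_nhds_zero
    exact ⟨ξ', ξs', hξ', hξs', hξ_law, hξs_law,
      tendsto_of_tendsto_of_tendsto_of_le_of_le tendsto_const_nhds hbound (fun _ ↦ zero_le) hle⟩
  · rintro ⟨ξ', ξs', hξ', hξs', hξ_law, hξs_law, hlim⟩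
    exact tendsto_of_tendsto_of_tendsto_of_le_of_le tendsto_const_nhds hlim (fun _ ↦ zero_le)
      fun n ↦ minPM_le hξ' (hξs' n) hξ_law (hξs_law n)

/-- On a complete separable metric space `X`, for `p ≥ 1`, assuming
every Borel probability measure on `ℕ → X` is the law of some random variable,
`d̂_p(ξ, ξₙ) → 0` iff there exist representatives `ξ′, (ξₙ′)ₙ` with `L(ξ′) = L(ξ)`,
`L(ξₙ′) = L(ξₙ)` and `d_p(ξ′, ξₙ′) → 0`. -/
theorem tendsto_minPM_dLp_zero_iff
    {Ω X : Type*} [MeasurableSpace Ω]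
    [MetricSpace X] [CompleteSpace X] [TopologicalSpace.SeparableSpace X]
    [MeasurableSpace X] [BorelSpace X]
    (P : Measure Ω) [IsProbabilityMeasure P]
    (hrich : ∀ μ : Measure (ℕ → X), IsProbabilityMeasure μ →
      ∃ ζ : Ω → ℕ → X, Measurable ζ ∧ Measure.map ζ P = μ)
    (p : ℝ) (hp : 1 ≤ p)
    (ξ : Ω → X) (hξ : Measurable ξ)
    (ξs : ℕ → Ω → X) (hξs : ∀ n, Measurable (ξs n)) :
    Tendsto (fun n => minPM P (dLp P p) ξ (ξs n)) atTop (𝓝 0) ↔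
    ∃ (ξ' : Ω → X) (ξs' : ℕ → Ω → X), Measurable ξ' ∧ (∀ n, Measurable (ξs' n)) ∧
      Measure.map ξ' P = Measure.map ξ P ∧
      (∀ n, Measure.map (ξs' n) P = Measure.map (ξs n) P) ∧
      Tendsto (fun n => dLp P p ξ' (ξs' n)) atTop (𝓝 0) := by
  have := UniformSpace.secondCountable_of_separable X
  exact tendsto_minPM_dLp_zero_iff_general P hrich (dependsOnJointLaw_dLp P p) ξ hξ ξs hξs
end

section
/- Let (X, ρ) be a complete separable metric space. Assume that for every Borel probability measure μ on the countable product ℕ → X there exists a Borel-measurable map ζ : Ω → (ℕ → X) whose law is μ. Define the Ky-Fan metric on R(X) by K(ξ, η) = inf { ε > 0 | ℙ[ρ(ξ, η) ≥ ε] < ε }. Then for ξ ∈ R(X) and a sequence (ξₙ)ₙ in R(X), lim_{n→∞} K̂(ξ, ξₙ) = 0 if and only if there exist ξ′ ∈ R(X) and a sequence (ξₙ′)ₙ in R(X) such that L(ξ′) = L(ξ), L(ξₙ′) = L(ξₙ) for all n, and (ξₙ′)ₙ converges to ξ′ in ℙ-probability (i.e. for every ε > 0, ℙ[ρ(ξₙ′,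 ξ′) ≥ ε] → 0). -/
open MeasureTheory Filter
open scoped ENNReal Topology

/-- The Ky-Fan metric on random variables:
`K(ξ, η) = inf { ε > 0 | ℙ[ρ(ξ, η) ≥ ε] < ε }`. -/
noncomputable def kyFan {Ω X : Type*} [MeasurableSpace Ω] [MetricSpace X]
    (P : Measure Ω) (ξ η : Ω → X) : ℝ≥0∞ :=
  ⨅ (ε : ℝ) (_ : 0 < ε) (_ : P {ω | ε ≤ dist (ξ ω) (η ω)} < ENNReal.ofReal ε),
    ENNReal.ofReal ε

/-!
Choose for each `n` a coupling `(aₙ, bₙ)` of the laws of `ξ` and `ξₙ` with `K(aₙ, bₙ)` within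
`1 / (n + 1)` of `K̂(ξ, ξₙ)`. All `aₙ` have the same law `μ`, so the laws of the pairs can be
glued along it: disintegrate each one as `μ ⊗ κₙ` and realise every `κₙ x` as the image of one and
the same uniform variable on `[0, 1]`. This produces a single law on `X × (ℕ → X)` whose marginal
on the first factor and the `n`-th coordinate of the second is the law of `(aₙ, bₙ)`. Since `K`
depends only on the joint law, a random variable with the glued law witnesses convergence in the
Ky-Fan metric, i.e. in probability.
-/

open ProbabilityTheory

section MinimalFunctional

variable {Ω X : Type*} [MeasurableSpace Ω] [MeasurableSpace X] {P : Measure Ω}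
  {e : (Ω → X) → (Ω → X) → ℝ≥0∞}

theorem minPM_lt_iff {ξ η : Ω → X} {r : ℝ≥0∞} :
    minPM P e ξ η < r ↔ ∃ ξ' η' : Ω → X, Measurable ξ' ∧ Measurable η' ∧
      Measure.map ξ' P = Measure.map ξ P ∧ Measure.map η' P = Measure.map η P ∧ e ξ' η' < r := by
  simp only [minPM, iInf_lt_iff, exists_prop]

theorem minPM_le_of_map_eq {ξ η ξ' η' : Ω → X} (hξ' : Measurable ξ') (hη' : Measurable η')
    (hξ : Measure.map ξ' P = Measure.map ξ P) (hη : Measure.map η' P = Measure.map η P) :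
    minPM P e ξ η ≤ e ξ' η' :=
  le_of_forall_gt fun _ h ↦ minPM_lt_iff.2 ⟨ξ', η', hξ', hη', hξ, hη, h⟩

theorem exists_map_eq_and_le_minPM_add {ξ η : Ω → X} (hξ : Measurable ξ) (hη : Measurable η)
    {δ : ℝ≥0∞} (hδ : δ ≠ 0) :
    ∃ ξ' η' : Ω → X, Measurable ξ' ∧ Measurable η' ∧ Measure.map ξ' P = Measure.map ξ P ∧
      Measure.map η' P = Measure.map η P ∧ e ξ' η' ≤ minPM P e ξ η + δ := by
  by_cases htop : minPM P e ξ η = ∞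
  · exact ⟨ξ, η, hξ, hη, rfl, rfl, by simp [htop]⟩
  · obtain ⟨ξ', η', hξ', hη', hmapξ, hmapη, hlt⟩ :=
      minPM_lt_iff.1 (ENNReal.lt_add_right htop hδ)
    exact ⟨ξ', η', hξ', hη', hmapξ, hmapη, hlt.le⟩

theorem tendsto_minPM_zero_iff {ξs ηs : ℕ → Ω → X} (hξs : ∀ n, Measurable (ξs n))
    (hηs : ∀ n, Measurable (ηs n)) :
    Tendsto (fun n ↦ minPM P e (ξs n) (ηs n)) atTop (𝓝 0) ↔
      ∃ ξs' ηs' : ℕ → Ω → X, (∀ n, Measurable (ξs' n)) ∧ (∀ n, Measurable (ηs' n)) ∧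
        (∀ n, Measure.map (ξs' n) P = Measure.map (ξs n) P) ∧
        (∀ n, Measure.map (ηs' n) P = Measure.map (ηs n) P) ∧
        Tendsto (fun n ↦ e (ξs' n) (ηs' n)) atTop (𝓝 0) := by
  constructor
  · intro h
    have hpos (n : ℕ) : ((n + 1 : ℕ) : ℝ≥0∞)⁻¹ ≠ 0 :=
      ENNReal.inv_ne_zero.2 (ENNReal.natCast_ne_top _)
    choose ξs' ηs' hξs' hηs' hmapξ hmapη hle using fun n ↦
      exists_map_eq_and_le_minPM_add (P := P) (e := e) (hξs n) (hηs n) (hpos n)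
    have hbound : Tendsto (fun n ↦ minPM P e (ξs n) (ηs n) + ((n + 1 : ℕ) : ℝ≥0∞)⁻¹)
        atTop (𝓝 0) := by
      simpa only [add_zero] using
        h.add ((tendsto_add_atTop_iff_nat 1).2 ENNReal.tendsto_inv_nat_nhds_zero)
    exact ⟨ξs', ηs', hξs', hηs', hmapξ, hmapη,
      tendsto_of_tendsto_of_tendsto_of_le_of_le tendsto_const_nhds hbound (fun _ ↦ zero_le) hle⟩
  · rintro ⟨ξs', ηs', hξs', hηs', hmapξ, hmapη, h⟩
    exact tendsto_of_tendsto_of_tendsto_of_le_of_le tendsto_const_nhds h (fun _ ↦ zero_le)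
      fun n ↦ minPM_le_of_map_eq (hξs' n) (hηs' n) (hmapξ n) (hmapη n)

end MinimalFunctional

section KyFan

variable {Ω X : Type*} [MeasurableSpace Ω] [MetricSpace X] {P : Measure Ω}

theorem kyFan_comm (ξ η : Ω → X) : kyFan P ξ η = kyFan P η ξ := by
  simp only [kyFan, dist_comm]

theorem kyFan_le_ofReal {ξ η : Ω → X} {ε : ℝ} (hε : 0 < ε)
    (h : P {ω | ε ≤ dist (ξ ω) (η ω)} < ENNReal.ofReal ε) : kyFan P ξ η ≤ ENNReal.ofReal ε :=
  iInf₂_le_of_le ε hε (iInf_le _ h)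

theorem measure_le_dist_le_ofReal_of_kyFan_lt {ξ η : Ω → X} {ε : ℝ}
    (h : kyFan P ξ η < ENNReal.ofReal ε) :
    P {ω | ε ≤ dist (ξ ω) (η ω)} ≤ ENNReal.ofReal ε := by
  simp only [kyFan, iInf_lt_iff] at h
  obtain ⟨δ, -, hP, hδ⟩ := h
  have hδε : δ ≤ ε := (ENNReal.ofReal_lt_ofReal_iff'.1 hδ).1.le
  calc
    P {ω | ε ≤ dist (ξ ω) (η ω)} ≤ P {ω | δ ≤ dist (ξ ω) (η ω)} :=
      measure_mono fun _ hω ↦ hδε.trans hω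
    _ ≤ ENNReal.ofReal ε := (hP.trans hδ).le

theorem tendsto_kyFan_zero_iff_tendstoInMeasure {ι : Type*} {l : Filter ι} {ξs : ι → Ω → X}
    {ξ : Ω → X} :
    Tendsto (fun i ↦ kyFan P (ξs i) ξ) l (𝓝 0) ↔ TendstoInMeasure P ξs l ξ := by
  rw [tendstoInMeasure_iff_dist]
  constructor
  · intro h ε hε
    rw [ENNReal.tendsto_nhds_zero]
    intro r hr
    obtain ⟨δ, -, hδ, hδr⟩ := ENNReal.lt_iff_exists_real_btwn.1 hr
    have hmin : 0 < min ε δ := lt_min hε (ENNReal.ofReal_pos.1 hδ)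
    filter_upwards [h.eventually_lt_const (ENNReal.ofReal_pos.2 hmin)] with i hi
    calc
      P {ω | ε ≤ dist (ξs i ω) (ξ ω)} ≤ P {ω | min ε δ ≤ dist (ξs i ω) (ξ ω)} :=
        measure_mono fun _ hω ↦ (min_le_left ε δ).trans hω
      _ ≤ ENNReal.ofReal (min ε δ) := measure_le_dist_le_ofReal_of_kyFan_lt hi
      _ ≤ ENNReal.ofReal δ := ENNReal.ofReal_le_ofReal (min_le_right ε δ)
      _ ≤ r := hδr.le
  · intro h
    rw [ENNReal.tendsto_nhds_zero]
    intro r hr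
    obtain ⟨δ, -, hδ, hδr⟩ := ENNReal.lt_iff_exists_real_btwn.1 hr
    have hδ' : 0 < δ := ENNReal.ofReal_pos.1 hδ
    filter_upwards [(h δ hδ').eventually_lt_const hδ] with i hi
    exact (kyFan_le_ofReal hδ' hi).trans hδr.le

theorem kyFan_eq_of_identDistrib_prodMk {Ω' : Type*} [MeasurableSpace Ω'] {P' : Measure Ω'}
    [SecondCountableTopology X] [MeasurableSpace X] [OpensMeasurableSpace X]
    {ξ η : Ω → X} {ξ' η' : Ω' → X}
    (h : IdentDistrib (fun ω ↦ (ξ ω, η ω)) (fun ω ↦ (ξ' ω, η' ω)) P P') :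
    kyFan P ξ η = kyFan P' ξ' η' := by
  have hmeasure (ε : ℝ) :
      P {ω | ε ≤ dist (ξ ω) (η ω)} = P' {ω | ε ≤ dist (ξ' ω) (η' ω)} :=
    h.measure_mem_eq (measurableSet_le measurable_const (measurable_fst.dist measurable_snd))
  simp only [kyFan, hmeasure]

end KyFan

section Gluing

theorem map_prodMk_prod_eq_compProd {α β γ : Type*} [MeasurableSpace α] [MeasurableSpace β]
    [MeasurableSpace γ] {μ : Measure α} [SFinite μ] {ν : Measure β} [SFinite ν]
    {κ : Kernel α γ} [IsSFiniteKernel κ] {f : α → β → γ} (hf : Measurable (Function.uncurry f))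
    (hfκ : ∀ x, ν.map (f x) = κ x) :
    (μ.prod ν).map (fun p ↦ (p.1, f p.1 p.2)) = μ ⊗ₘ κ := by
  have hgraph : Measurable fun p : α × β ↦ (p.1, f p.1 p.2) := measurable_fst.prodMk hf
  ext s hs
  rw [Measure.map_apply hgraph hs, Measure.prod_apply (hgraph hs), Measure.compProd_apply hs]
  refine lintegral_congr fun x ↦ ?_
  rw [← hfκ x, Measure.map_apply hf.of_uncurry_left (measurable_prodMk_left hs)]
  rfl

theorem exists_measurable_map_prod_unitInterval_eq {α β : Type*} [MeasurableSpace α]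
    [MeasurableSpace β] [StandardBorelSpace β] [Nonempty β] (π : Measure (α × β))
    [IsFiniteMeasure π] :
    ∃ f : α → unitInterval → β, Measurable (Function.uncurry f) ∧
      (π.fst.prod volume).map (fun p ↦ (p.1, f p.1 p.2)) = π := by
  obtain ⟨f, hf, hfπ⟩ := π.condKernel.exists_measurable_map_eq_unitInterval
  exact ⟨f, hf, (map_prodMk_prod_eq_compProd hf hfπ).trans (π.disintegrate π.condKernel)⟩

theorem exists_measure_fst_eq_and_map_prodMk_eval_eq {α ι : Type*} {β : ι → Type*}
    [MeasurableSpace α] [∀ i, MeasurableSpace (β i)] [∀ i, StandardBorelSpace (β i)]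
    [∀ i, Nonempty (β i)] {μ : Measure α} [IsFiniteMeasure μ] {π : ∀ i, Measure (α × β i)}
    (hπ : ∀ i, (π i).fst = μ) :
    ∃ ν : Measure (α × ∀ i, β i), ν.fst = μ ∧ ∀ i, ν.map (fun p ↦ (p.1, p.2 i)) = π i := by
  have hfinite (i : ι) : IsFiniteMeasure (π i) :=
    ⟨by rw [← Measure.fst_univ, hπ i]; exact measure_lt_top μ Set.univ⟩
  choose f hf hfπ using fun i ↦ exists_measurable_map_prod_unitInterval_eq (π i)
  have hg : Measurable fun p : α × unitInterval ↦ (p.1, fun i ↦ f i p.1 p.2) :=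
    measurable_fst.prodMk (measurable_pi_lambda _ hf)
  refine ⟨(μ.prod volume).map fun p ↦ (p.1, fun i ↦ f i p.1 p.2), ?_, fun i ↦ ?_⟩
  · rw [Measure.fst, Measure.map_map measurable_fst hg]
    exact Measure.fst_prod
  · rw [Measure.map_map (by fun_prop) hg, ← hfπ i, hπ i]
    rfl

end Gluing

section Realization

variable {Ω : Type*} [MeasurableSpace Ω] {P : Measure Ω}

theorem exists_measurable_map_eq_of_leftInverse {α β : Type*} [MeasurableSpace α]
    [MeasurableSpace β]
    (hα : ∀ μ : Measure α, IsProbabilityMeasure μ → ∃ ζ : Ω → α, Measurable ζ ∧ P.map ζ = μ)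
    {i : β → α} {r : α → β} (hi : Measurable i) (hr : Measurable r)
    (hri : Function.LeftInverse r i) (μ : Measure β) [IsProbabilityMeasure μ] :
    ∃ ζ : Ω → β, Measurable ζ ∧ P.map ζ = μ := by
  obtain ⟨ζ, hζ, hζμ⟩ := hα (μ.map i) (Measure.isProbabilityMeasure_map hi.aemeasurable)
  refine ⟨r ∘ ζ, hr.comp hζ, ?_⟩
  rw [← Measure.map_map hr hζ, hζμ, Measure.map_map hr hi, hri.comp_eq_id, Measure.map_id]

theorem exists_measurable_map_eq_prod_pi {X : Type*} [MeasurableSpace X]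
    (hrich : ∀ μ : Measure (ℕ → X), IsProbabilityMeasure μ →
      ∃ ζ : Ω → ℕ → X, Measurable ζ ∧ P.map ζ = μ)
    (μ : Measure (X × (ℕ → X))) [IsProbabilityMeasure μ] :
    ∃ ζ : Ω → X × (ℕ → X), Measurable ζ ∧ P.map ζ = μ := by
  have hcons : Measurable fun (p : X × (ℕ → X)) (k : ℕ) ↦ (Nat.casesOn k p.1 p.2 : X) := by
    refine measurable_pi_lambda _ fun k ↦ ?_
    cases k with
    | zero => exact measurable_fst
    | succ n => exact (measurable_pi_apply n).comp measurable_snd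
  have hsplit : Measurable fun z : ℕ → X ↦ (z 0, fun n ↦ z (n + 1)) := by fun_prop
  exact exists_measurable_map_eq_of_leftInverse hrich hcons hsplit (fun _ ↦ rfl) μ

theorem exists_forall_identDistrib_prodMk {X : Type*} [MeasurableSpace X] [StandardBorelSpace X]
    [IsProbabilityMeasure P]
    (hrich : ∀ μ : Measure (ℕ → X), IsProbabilityMeasure μ →
      ∃ ζ : Ω → ℕ → X, Measurable ζ ∧ P.map ζ = μ)
    {μ : Measure X} {a b : ℕ → Ω → X} (ha : ∀ n, Measurable (a n))
    (hb : ∀ n, Measurable (b n)) (hmap : ∀ n, P.map (a n) = μ) :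
    ∃ (ξ' : Ω → X) (η : ℕ → Ω → X), Measurable ξ' ∧ (∀ n, Measurable (η n)) ∧
      ∀ n, IdentDistrib (fun ω ↦ (ξ' ω, η n ω)) (fun ω ↦ (a n ω, b n ω)) P P := by
  have : Nonempty X := (nonempty_of_isProbabilityMeasure P).map (a 0)
  have : IsProbabilityMeasure μ :=
    hmap 0 ▸ Measure.isProbabilityMeasure_map (ha 0).aemeasurable
  obtain ⟨ν, hνfst, hν⟩ := exists_measure_fst_eq_and_map_prodMk_eval_eq
    (π := fun n ↦ P.map fun ω ↦ (a n ω, b n ω))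
    fun n ↦ (Measure.fst_map_prodMk (hb n)).trans (hmap n)
  have : IsProbabilityMeasure ν :=
    ⟨by rw [← Measure.fst_univ, hνfst]; exact measure_univ⟩
  obtain ⟨ζ, hζ, hζν⟩ := exists_measurable_map_eq_prod_pi hrich ν
  refine ⟨fun ω ↦ (ζ ω).1, fun n ω ↦ (ζ ω).2 n, by fun_prop, by fun_prop, fun n ↦ ?_⟩
  refine ⟨by fun_prop, ((ha n).prodMk (hb n)).aemeasurable, ?_⟩
  rw [← hν n, ← hζν, Measure.map_map (by fun_prop) hζ]
  rfl

end Realization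

theorem tendsto_minPM_kyFan_zero_iff_general
    {Ω X : Type*} [MeasurableSpace Ω]
    [MetricSpace X] [SecondCountableTopology X]
    [MeasurableSpace X] [OpensMeasurableSpace X] [StandardBorelSpace X]
    (P : Measure Ω) [IsProbabilityMeasure P]
    (hrich : ∀ μ : Measure (ℕ → X), IsProbabilityMeasure μ →
      ∃ ζ : Ω → ℕ → X, Measurable ζ ∧ Measure.map ζ P = μ)
    (ξ : Ω → X) (hξ : Measurable ξ)
    (ξs : ℕ → Ω → X) (hξs : ∀ n, Measurable (ξs n)) :
    Tendsto (fun n => minPM P (kyFan P) ξ (ξs n)) atTop (𝓝 0) ↔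
    ∃ (ξ' : Ω → X) (ξs' : ℕ → Ω → X), Measurable ξ' ∧ (∀ n, Measurable (ξs' n)) ∧
      Measure.map ξ' P = Measure.map ξ P ∧
      (∀ n, Measure.map (ξs' n) P = Measure.map (ξs n) P) ∧
      (∀ ε : ℝ, 0 < ε →
        Tendsto (fun n => P {ω | ε ≤ dist (ξs' n ω) (ξ' ω)}) atTop (𝓝 0)) := by
  rw [tendsto_minPM_zero_iff (fun _ ↦ hξ) hξs]
  simp only [← tendstoInMeasure_iff_dist, ← tendsto_kyFan_zero_iff_tendstoInMeasure]
  constructor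
  · rintro ⟨a, b, ha, hb, hmapa, hmapb, hab⟩
    obtain ⟨ξ', ξs', hξ', hξs', hident⟩ :=
      exists_forall_identDistrib_prodMk hrich ha hb hmapa
    refine ⟨ξ', ξs', hξ', hξs', ?_, fun n ↦ ?_, ?_⟩
    · exact ((hident 0).comp measurable_fst).map_eq.trans (hmapa 0)
    · exact ((hident n).comp measurable_snd).map_eq.trans (hmapb n)
    · simpa only [kyFan_comm (ξs' _), kyFan_eq_of_identDistrib_prodMk (hident _)] using hab
  · rintro ⟨ξ', ξs', hξ', hξs', hmapξ, hmapξs, hlim⟩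
    refine ⟨fun _ ↦ ξ', ξs', fun _ ↦ hξ', hξs', fun _ ↦ hmapξ, hmapξs, ?_⟩
    simpa only [kyFan_comm ξ'] using hlim

/-- On a complete separable metric space `X`, assuming every Borel
probability measure on `ℕ → X` is the law of some random variable,
`K̂(ξ, ξₙ) → 0` iff there exist representatives `ξ′, (ξₙ′)ₙ` with `L(ξ′) = L(ξ)`,
`L(ξₙ′) = L(ξₙ)` and `ξₙ′ → ξ′` in ℙ-probability. -/
theorem tendsto_minPM_kyFan_zero_iff
    {Ω X : Type*} [MeasurableSpace Ω]
    [MetricSpace X] [CompleteSpace X] [TopologicalSpace.SeparableSpace X]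
    [MeasurableSpace X] [BorelSpace X]
    (P : Measure Ω) [IsProbabilityMeasure P]
    (hrich : ∀ μ : Measure (ℕ → X), IsProbabilityMeasure μ →
      ∃ ζ : Ω → ℕ → X, Measurable ζ ∧ Measure.map ζ P = μ)
    (ξ : Ω → X) (hξ : Measurable ξ)
    (ξs : ℕ → Ω → X) (hξs : ∀ n, Measurable (ξs n)) :
    Tendsto (fun n => minPM P (kyFan P) ξ (ξs n)) atTop (𝓝 0) ↔
    ∃ (ξ' : Ω → X) (ξs' : ℕ → Ω → X), Measurable ξ' ∧ (∀ n, Measurable (ξs' n)) ∧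
      Measure.map ξ' P = Measure.map ξ P ∧
      (∀ n, Measure.map (ξs' n) P = Measure.map (ξs n) P) ∧
      (∀ ε : ℝ, 0 < ε →
        Tendsto (fun n => P {ω | ε ≤ dist (ξs' n ω) (ξ' ω)}) atTop (𝓝 0)) :=
  have : SecondCountableTopology X := UniformSpace.secondCountable_of_separable X
  tendsto_minPM_kyFan_zero_iff_general P hrich ξ hξ ξs hξs
end
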